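/- Let C ⊂ R^{2k+2ℓ+2} be the convex hull of the vectors ρ(e), where e ranges over the edges of a vertex-disjoint union of a cycle of length 2k+1 and a cycle of length 2ℓ+1 on a common vertex set of 2k+2ℓ+2 vertices (k, ℓ ≥ 1). Then dim C = 2k+2ℓ+1, the all-ones vector (1,1,...,1) lies in the interior of (k+ℓ+1)C, so codeg(C) ≤ k+ℓ+1 and hence deg(C) ≥ k+ℓ+1. -/

import Mathlib

open MvPolynomial Pointwise

/-- `ρ({i,j}) = e_i + e_j` : the 0/1 (incidence) vector of an edge. -/
noncomputable def rho {N : ℕ} (e : Sym2 (Fin N)) : Fin N → ℝ :=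
  fun v => if v ∈ e then 1 else 0

/-- The edge polytope of a graph on `Fin N`. -/
noncomputable def edgePolytope {N : ℕ} (G : SimpleGraph (Fin N)) : Set (Fin N → ℝ) :=
  convexHull ℝ (rho '' G.edgeSet)

/-- Number of lattice points of the `t`-th dilation (`= 1` for `t = 0`). -/
noncomputable def ehr {N : ℕ} (P : Set (Fin N → ℝ)) (t : ℕ) : ℕ :=
  if t = 0 then 1 else Nat.card {x : Fin N → ℤ // (fun i => (x i : ℝ)) ∈ (t : ℝ) • P}

/-- The dimension of a polytope: the rank of the direction of its affine span. -/
noncomputable def polyDim {N : ℕ} (P : Set (Fin N → ℝ)) : ℕ :=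
  Module.finrank ℝ (affineSpan ℝ P).direction

/-- The `i`-th coefficient of `(1-λ)^{d+1} (1 + Σ_{t≥1} |tP ∩ Z^N| λ^t)`. -/
noncomputable def deltaCoeff {N : ℕ} (P : Set (Fin N → ℝ)) (i : ℕ) : ℤ :=
  ∑ j ∈ Finset.range (i + 1),
    (-1 : ℤ) ^ j * (Nat.choose (polyDim P + 1) j : ℤ) * (ehr P (i - j) : ℤ)

/-- The degree of the δ-polynomial of `P`. -/
noncomputable def polyDeg {N : ℕ} (P : Set (Fin N → ℝ)) : ℕ :=
  sSup {i : ℕ | deltaCoeff P i ≠ 0}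

/-- The monomial `t_i t_j s` attached to an edge `{i,j}`; `s` is the variable `none`. -/
noncomputable def edgeMonom (K : Type*) [Field K] {V : Type*} (e : Sym2 V) :
    MvPolynomial (Option V) K :=
  Sym2.lift ⟨fun i j => X (some i) * X (some j) * X none, fun i j => by ring⟩ e

/-- The edge ring `K[G]`, the subalgebra generated by the monomials `t^{ρ(e)} s`. -/
noncomputable def edgeRing (K : Type*) [Field K] {V : Type*} (G : SimpleGraph V) :
    Subalgebra K (MvPolynomial (Option V) K) :=
  Algebra.adjoin K (edgeMonom K '' G.edgeSet)

/-- The toric ideal `I_G`: kernel of `x_e ↦ t^{ρ(e)} s`. -/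
noncomputable def toricIdeal (K : Type*) [Field K] {V : Type*} (G : SimpleGraph V) :
    Ideal (MvPolynomial G.edgeSet K) :=
  RingHom.ker (MvPolynomial.aeval (fun e : G.edgeSet => edgeMonom K (e : Sym2 V)) :
    MvPolynomial G.edgeSet K →ₐ[K] MvPolynomial (Option V) K)

/-- `S/I` has a `q`-linear (minimal graded free) resolution: there is a graded free
resolution of `S/I` in which the free module at homological step `i ≥ 1` is generated
in the single degree `q + i - 1`; equivalently all Betti numbers `β_{i,j}` with
`j ≠ q + i - 1` vanish. -/
def HasLinearResolution {σ K : Type*} [Field K] (q : ℕ)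
    (I : Ideal (MvPolynomial σ K)) : Prop :=
  ∃ (b : ℕ → ℕ)
    (φ₀ : (Fin (b 0) →₀ MvPolynomial σ K) →ₗ[MvPolynomial σ K] MvPolynomial σ K)
    (φ : ∀ i : ℕ,
      (Fin (b (i + 1)) →₀ MvPolynomial σ K) →ₗ[MvPolynomial σ K]
        (Fin (b i) →₀ MvPolynomial σ K)),
    LinearMap.range φ₀ = I ∧
    LinearMap.ker φ₀ = LinearMap.range (φ 0) ∧
    (∀ i, LinearMap.ker (φ i) = LinearMap.range (φ (i + 1))) ∧
    (∀ j, (φ₀ (Finsupp.single j 1)).IsHomogeneous q) ∧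
    (∀ i j k, ((φ i (Finsupp.single j 1)) k).IsHomogeneous 1)

/-! Every connected component of `G` is an odd cycle, so the vertex weights determine the edge
weights and `C` is a simplex with `N = 2m` vertices, `m = k + ℓ + 1`. The all-ones vector is in the
interior of `mC` because its edge weights are all `1/2`. Modulo `1`, the edge weights of a lattice
point of `tC` alternate in sign along each cycle; as the cycles are odd, they are constant and
`2`-torsion on each cycle, and the two constants agree because the edge weights have integral sum
`t`. Hence the edge weights are all in `ℕ` or all in `ℕ + 1/2`. Counting both kinds gives `δ(C, λ) =
1 + λ ^ m`. -/

theorem isCycleOn_mul_of_commute {V : Type*} {σ τ : Equiv.Perm V} {s : Set V}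
    (hσ : σ.IsCycleOn s) (hcomm : Commute σ τ) (hτ : ∀ x ∈ s, τ x = x) : (σ * τ).IsCycleOn s := by
  refine ⟨hσ.1.congr fun x hx => by simp [hτ x hx], fun x hx y hy => ?_⟩
  obtain ⟨j, rfl⟩ := hσ.2 hx hy
  refine ⟨j, ?_⟩
  rw [hcomm.mul_zpow, Equiv.Perm.mul_apply,
    Equiv.Perm.zpow_apply_eq_self_of_apply_eq_self (hτ x hx)]

section CyclePerm

variable {V : Type*} [DecidableEq V] {G : SimpleGraph V} {v : V} {c : G.Walk v v}

/-- The permutation of the vertices that moves each vertex of a closed walk to the next one and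
fixes all other vertices. It is only meaningful when the walk is a cycle. -/
def cyclePerm (c : G.Walk v v) : Equiv.Perm V :=
  c.support.dropLast.formPerm

omit [DecidableEq V] in
theorem mem_dropLast_support_iff (hc : ¬c.Nil) {x : V} :
    x ∈ c.support.dropLast ↔ x ∈ c.support := by
  rw [← c.tail_support_perm_dropLast_support.mem_iff, ← c.cons_tail_support, List.mem_cons,
    List.tail_cons, or_iff_right_of_imp]
  rintro rfl
  exact c.end_mem_tail_support hc

theorem isCycleOn_cyclePerm (hc : c.IsCycle) : (cyclePerm c).IsCycleOn {x | x ∈ c.support} := by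
  simpa only [cyclePerm, mem_dropLast_support_iff hc.not_nil] using
    hc.nodup_dropLast_support.isCycleOn_formPerm

theorem cyclePerm_apply_of_notMem_support {x : V} (hx : x ∉ c.support) : cyclePerm c x = x :=
  List.formPerm_apply_of_notMem fun h => hx (List.mem_of_mem_dropLast h)

theorem card_toFinset_support (hc : c.IsCycle) : c.support.toFinset.card = c.length := by
  have : c.support.toFinset = c.support.dropLast.toFinset := by
    ext x
    simp [mem_dropLast_support_iff hc.not_nil]
  rw [this, List.toFinset_card_of_nodup hc.nodup_dropLast_support]
  simp

theorem cyclePerm_getVert (hc : c.IsCycle) {i : ℕ} (hi : i < c.length) :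
    cyclePerm c (c.getVert i) = c.getVert (i + 1) := by
  have hlen : c.support.dropLast.length = c.length := by simp
  have hget (j : ℕ) (hj : j < c.support.dropLast.length) :
      c.support.dropLast[j] = c.getVert j := by
    rw [List.getElem_dropLast, c.getVert_eq_support_getElem (by omega)]
  rw [cyclePerm, ← hget i (hlen ▸ hi), List.formPerm_apply_getElem _ hc.nodup_dropLast_support,
    hget, hlen]
  rcases (Nat.succ_le_of_lt hi).lt_or_eq with h | h
  · rw [Nat.mod_eq_of_lt h]
  · simp [← Nat.succ_eq_add_one, h]

theorem setOf_mem_edges_eq_image_cyclePerm (hc : c.IsCycle) :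
    {e | e ∈ c.edges} = (fun x => s(x, cyclePerm c x)) '' {x | x ∈ c.support} := by
  ext e
  constructor
  · intro he
    obtain ⟨i, hi, rfl⟩ := List.mem_iff_getElem.1 he
    rw [SimpleGraph.Walk.length_edges] at hi
    exact ⟨c.getVert i, c.getVert_mem_support i, by
      simp only [cyclePerm_getVert hc hi, SimpleGraph.Walk.getElem_edges]⟩
  · rintro ⟨x, hx, rfl⟩
    obtain ⟨i, hi, rfl⟩ :=
      List.mem_iff_getElem.1 ((mem_dropLast_support_iff hc.not_nil).2 hx)
    have hi' : i < c.length := by simpa using hi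
    rw [List.getElem_dropLast, ← c.getVert_eq_support_getElem hi'.le]
    exact (c.mk_mem_edges_iff_exists).2 ⟨i, hi', by rw [cyclePerm_getVert hc hi']⟩

end CyclePerm

/-- `σ` permutes `A` and its complement cyclically, and both sets have odd size. -/
structure IsOddCyclePair {V : Type*} [Fintype V] [DecidableEq V]
    (σ : Equiv.Perm V) (A : Finset V) : Prop where
  isCycleOn : σ.IsCycleOn A
  isCycleOn_compl : σ.IsCycleOn (Aᶜ : Finset V)
  odd_card : Odd A.card
  odd_card_compl : Odd Aᶜ.card

/-- The edges of `G` are the pairs `{v, σ v}`, so the components of `G` are the orbits of `σ`. -/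
def IsOrbitGraph {V : Type*} (G : SimpleGraph V) (σ : Equiv.Perm V) : Prop :=
  G.edgeSet = Set.range fun v => s(v, σ v)

theorem exists_isOddCyclePair {V : Type*} [Fintype V] [DecidableEq V] {G : SimpleGraph V}
    {v w : V} {c₁ : G.Walk v v} {c₂ : G.Walk w w} (hc₁ : c₁.IsCycle) (hc₂ : c₂.IsCycle)
    (hodd₁ : Odd c₁.length) (hodd₂ : Odd c₂.length)
    (hdisj : ∀ x, x ∈ c₁.support → x ∉ c₂.support)
    (hcover : ∀ x, x ∈ c₁.support ∨ x ∈ c₂.support)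
    (hedge : G.edgeSet = {e | e ∈ c₁.edges} ∪ {e | e ∈ c₂.edges}) :
    ∃ (σ : Equiv.Perm V) (A : Finset V), IsOddCyclePair σ A ∧ IsOrbitGraph G σ := by
  have hfix₁ : ∀ x ∈ c₂.support, cyclePerm c₁ x = x := fun x hx =>
    cyclePerm_apply_of_notMem_support fun h => hdisj x h hx
  have hfix₂ : ∀ x ∈ c₁.support, cyclePerm c₂ x = x := fun x hx =>
    cyclePerm_apply_of_notMem_support (hdisj x hx)
  have hcomm : Commute (cyclePerm c₁) (cyclePerm c₂) :=
    Equiv.Perm.Disjoint.commute fun x => (hcover x).symm.imp (hfix₁ x) (hfix₂ x)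
  have hcompl : c₁.support.toFinsetᶜ = c₂.support.toFinset := by
    ext x
    simpa using ⟨(hcover x).resolve_left, fun h₂ h₁ => hdisj x h₁ h₂⟩
  refine ⟨cyclePerm c₁ * cyclePerm c₂, c₁.support.toFinset, ⟨?_, ?_, ?_, ?_⟩, ?_⟩
  · rw [List.coe_toFinset]
    exact isCycleOn_mul_of_commute (isCycleOn_cyclePerm hc₁) hcomm hfix₂
  · rw [hcompl, List.coe_toFinset, hcomm.eq]
    exact isCycleOn_mul_of_commute (isCycleOn_cyclePerm hc₂) hcomm.symm hfix₁
  · rwa [card_toFinset_support hc₁]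
  · rwa [hcompl, card_toFinset_support hc₂]
  · have huniv : {x | x ∈ c₁.support} ∪ {x | x ∈ c₂.support} = Set.univ :=
      Set.eq_univ_of_forall hcover
    rw [IsOrbitGraph, hedge, setOf_mem_edges_eq_image_cyclePerm hc₁,
      setOf_mem_edges_eq_image_cyclePerm hc₂, ← Set.image_univ, ← huniv, Set.image_union]
    congr 1
    · exact Set.image_congr fun x hx => by rw [Equiv.Perm.mul_apply, hfix₂ x hx]
    · exact Set.image_congr fun x hx => by
        rw [hcomm.eq, Equiv.Perm.mul_apply, hfix₁ x hx]

section Alternating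

variable {V Q : Type*} [AddCommGroup Q] {σ : Equiv.Perm V} {s : Finset V} {q : V → Q} {u v : V}

theorem apply_pow_of_forall_apply_eq_neg (hq : ∀ v, q (σ v) = -q v) (j : ℕ) (v : V) :
    q ((σ ^ j) v) = (-1 : ℤ) ^ j • q v := by
  induction j with
  | zero => simp
  | succ j ih => rw [pow_succ', Equiv.Perm.mul_apply, hq, ih, pow_succ', mul_smul, neg_one_smul]

theorem two_nsmul_eq_zero_of_isCycleOn (hq : ∀ v, q (σ v) = -q v) (hσ : σ.IsCycleOn s)
    (hs : Odd s.card) (hv : v ∈ s) : 2 • q v = 0 := by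
  have h : q v = -q v := by
    simpa [hσ.pow_card_apply hv, hs.neg_one_pow] using
      apply_pow_of_forall_apply_eq_neg hq s.card v
  rw [two_nsmul, ← eq_neg_iff_add_eq_zero]
  exact h

theorem apply_eq_apply_of_isCycleOn (hq : ∀ v, q (σ v) = -q v) (hσ : σ.IsCycleOn s)
    (hs : Odd s.card) (hu : u ∈ s) (hv : v ∈ s) : q u = q v := by
  have hneg : -q v = q v := by
    rw [neg_eq_iff_add_eq_zero, ← two_nsmul, two_nsmul_eq_zero_of_isCycleOn hq hσ hs hv]
  obtain ⟨j, -, rfl⟩ := hσ.exists_pow_eq hv hu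
  rw [apply_pow_of_forall_apply_eq_neg hq]
  rcases neg_one_pow_eq_or ℤ j with h | h <;> simp [h, hneg]

theorem sum_eq_apply_of_isCycleOn (hq : ∀ v, q (σ v) = -q v) (hσ : σ.IsCycleOn s)
    (hs : Odd s.card) (hv : v ∈ s) : ∑ u ∈ s, q u = q v := by
  obtain ⟨r, hr⟩ := hs
  rw [Finset.sum_congr rfl fun u hu => apply_eq_apply_of_isCycleOn hq hσ ⟨r, hr⟩ hu hv,
    Finset.sum_const, hr, succ_nsmul, mul_nsmul, two_nsmul_eq_zero_of_isCycleOn hq hσ ⟨r, hr⟩ hv,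
    nsmul_zero, zero_add]

end Alternating

namespace IsOddCyclePair

variable {V Q : Type*} [Fintype V] [DecidableEq V] [AddCommGroup Q] {σ : Equiv.Perm V}
  {A : Finset V} {q : V → Q}

theorem nonempty (h : IsOddCyclePair σ A) : Nonempty V :=
  (Finset.card_pos.1 h.odd_card.pos).to_type

theorem pos {N : ℕ} {σ : Equiv.Perm (Fin N)} {A : Finset (Fin N)} (h : IsOddCyclePair σ A) :
    0 < N :=
  Fin.pos_iff_nonempty.2 h.nonempty

theorem two_nsmul_eq_zero (h : IsOddCyclePair σ A) (hq : ∀ v, q (σ v) = -q v) (v : V) :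
    2 • q v = 0 := by
  by_cases hv : v ∈ A
  · exact two_nsmul_eq_zero_of_isCycleOn hq h.isCycleOn h.odd_card hv
  · exact two_nsmul_eq_zero_of_isCycleOn hq h.isCycleOn_compl h.odd_card_compl
      (Finset.mem_compl.2 hv)

theorem exists_forall_eq (h : IsOddCyclePair σ A) (hq : ∀ v, q (σ v) = -q v)
    (hsum : ∑ v, q v = 0) : ∃ a, 2 • a = 0 ∧ ∀ v, q v = a := by
  obtain ⟨a, ha⟩ := Finset.card_pos.1 h.odd_card.pos
  obtain ⟨b, hb⟩ := Finset.card_pos.1 h.odd_card_compl.pos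
  have htwo := h.two_nsmul_eq_zero hq a
  have hba : q b = q a := by
    rw [← Finset.sum_add_sum_compl A, sum_eq_apply_of_isCycleOn hq h.isCycleOn h.odd_card ha,
      sum_eq_apply_of_isCycleOn hq h.isCycleOn_compl h.odd_card_compl hb, ← htwo, two_nsmul] at hsum
    exact add_left_cancel hsum
  refine ⟨q a, htwo, fun v => ?_⟩
  by_cases hv : v ∈ A
  · exact apply_eq_apply_of_isCycleOn hq h.isCycleOn h.odd_card hv ha
  · exact hba ▸ apply_eq_apply_of_isCycleOn hq h.isCycleOn_compl h.odd_card_compl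
      (Finset.mem_compl.2 hv) hb

theorem exists_forall_eq_intCast_add_half (h : IsOddCyclePair σ A) {f : V → ℝ} {x : V → ℤ} {t : ℤ}
    (hx : ∀ v, f (σ v) + f v = x v) (hsum : ∑ v, f v = t) :
    ∃ (ε : Fin 2) (z : V → ℤ), ∀ v, f v = z v + ε / 2 := by
  let π : ℝ →+ AddCircle (1 : ℝ) := QuotientAddGroup.mk' _
  have hker (r : ℝ) : π r = 0 ↔ ∃ n : ℤ, r = n :=
    (AddCircle.coe_eq_zero_iff 1).trans (by simp [eq_comm])
  obtain ⟨a, ha, hfa⟩ := h.exists_forall_eq (q := π ∘ f)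
    (fun v => eq_neg_of_add_eq_zero_left (by simp [← map_add, hx, hker]))
    (by simp [← map_sum, hsum, hker])
  obtain ⟨ε, hε, rfl⟩ := (AddCircle.nsmul_eq_zero_iff two_pos).1 ha
  have hz (v : V) : ∃ n : ℤ, f v - ε / 2 = n := by
    rw [← hker, map_sub, sub_eq_zero]
    exact (hfa v).trans (by simp [π])
  choose z hz using hz
  exact ⟨⟨ε, hε⟩, z, fun v => by simp [← hz]⟩

end IsOddCyclePair

section VertexWeights

variable {V : Type*} {σ : Equiv.Perm V} {A : Finset V}

/-- The linear map sending a weight `f v` on each edge `{v, σ v}` to the total weight of the edges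
at each vertex. -/
def vertexWeights (R : Type*) [Semiring R] (σ : Equiv.Perm V) : (V → R) →ₗ[R] (V → R) :=
  LinearMap.id + LinearMap.funLeft R R σ.symm

@[simp]
theorem vertexWeights_apply {R : Type*} [Semiring R] (f : V → R) (v : V) :
    vertexWeights R σ f v = f v + f (σ.symm v) := rfl

theorem vertexWeights_single {R : Type*} [Semiring R] [DecidableEq V] (v : V) :
    vertexWeights R σ (Pi.single v 1) = Pi.single v 1 + Pi.single (σ v) 1 := by
  ext u
  simp [Pi.single_apply, Equiv.symm_apply_eq]

theorem IsOddCyclePair.vertexWeights_injective {R : Type*} [Ring R] [IsAddTorsionFree R]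
    [Fintype V] [DecidableEq V] (h : IsOddCyclePair σ A) :
    Function.Injective (vertexWeights R σ) := by
  refine (injective_iff_map_eq_zero _).2 fun f hf => funext fun v => ?_
  have hneg (u : V) : f (σ u) = -f u :=
    eq_neg_of_add_eq_zero_left (by simpa using congrFun hf (σ u))
  exact (nsmul_eq_zero_iff_right two_ne_zero).1 (h.two_nsmul_eq_zero hneg v)

end VertexWeights

section StdSimplex

theorem mem_intrinsicInterior_stdSimplex {ι : Type*} [Fintype ι] {f : ι → ℝ}
    (hpos : ∀ i, 0 < f i) (hsum : ∑ i, f i = 1) :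
    f ∈ intrinsicInterior ℝ (stdSimplex ℝ ι) := by
  have hspan : ∀ x ∈ affineSpan ℝ (stdSimplex ℝ ι), ∑ i, x i = 1 := fun x hx => by
    refine affineSpan_induction (p := fun x => ∑ i, x i = 1) hx (fun y hy => hy.2) ?_
    intro c x y z hx hy hz
    simp [Finset.sum_add_distrib, ← Finset.mul_sum, hx, hy, hz]
  have hf : f ∈ stdSimplex ℝ ι := ⟨fun i => (hpos i).le, hsum⟩
  refine mem_intrinsicInterior.2 ⟨⟨f, subset_affineSpan ℝ _ hf⟩, ?_, rfl⟩
  refine mem_interior.2 ⟨{x | ∀ i, 0 < x.1 i}, fun x hx => ?_, ?_, hpos⟩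
  · exact ⟨fun i => (hx i).le, hspan x x.2⟩
  · simp only [Set.ofPred_forall]
    exact isOpen_iInter_of_finite fun i =>
      isOpen_lt continuous_const ((continuous_apply i).comp continuous_subtype_val)

theorem polyDim_image_stdSimplex {M N : ℕ} [NeZero M] {T : (Fin M → ℝ) →ₗ[ℝ] (Fin N → ℝ)}
    (hT : Function.Injective T) : polyDim (T '' stdSimplex ℝ (Fin M)) = M - 1 := by
  have hli : LinearIndependent ℝ fun v => T (Pi.single v 1) :=
    (Pi.linearIndependent_single_one (Fin M) ℝ).map' T (LinearMap.ker_eq_bot.2 hT)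
  rw [polyDim, ← convexHull_rangle_single_eq_stdSimplex, LinearMap.image_convexHull,
    affineSpan_convexHull, direction_affineSpan, ← Set.range_comp]
  refine hli.affineIndependent.finrank_vectorSpan ?_
  simp [Nat.sub_add_cancel NeZero.one_le]

end StdSimplex

section Polytope

variable {N : ℕ} {G : SimpleGraph (Fin N)} {σ : Equiv.Perm (Fin N)} {A : Finset (Fin N)}

theorem IsOrbitGraph.rho_eq_vertexWeights_single (hG : IsOrbitGraph G σ) (v : Fin N) :
    rho s(v, σ v) = vertexWeights ℝ σ (Pi.single v 1) := by
  have hv : v ≠ σ v := G.ne_of_adj (show s(v, σ v) ∈ G.edgeSet from hG ▸ ⟨v, rfl⟩)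
  ext u
  rw [vertexWeights_single]
  by_cases hu : u = v <;> simp [rho, Pi.single_apply, hu, hv]

theorem IsOrbitGraph.edgePolytope_eq_image_stdSimplex (hG : IsOrbitGraph G σ) :
    edgePolytope G = vertexWeights ℝ σ '' stdSimplex ℝ (Fin N) := by
  rw [edgePolytope, hG, ← convexHull_rangle_single_eq_stdSimplex, LinearMap.image_convexHull,
    ← Set.range_comp, ← Set.range_comp]
  exact congrArg _ (congrArg _ (funext hG.rho_eq_vertexWeights_single))

theorem polyDim_edgePolytope (hG : IsOrbitGraph G σ) (h : IsOddCyclePair σ A) :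
    polyDim (edgePolytope G) = N - 1 := by
  have : NeZero N := ⟨h.pos.ne'⟩
  rw [hG.edgePolytope_eq_image_stdSimplex, polyDim_image_stdSimplex h.vertexWeights_injective]

theorem vertexWeights_mem_smul_edgePolytope_iff (hG : IsOrbitGraph G σ) (h : IsOddCyclePair σ A)
    {t : ℝ} (ht : 0 < t) {f : Fin N → ℝ} :
    vertexWeights ℝ σ f ∈ t • edgePolytope G ↔ (∀ v, 0 ≤ f v) ∧ ∑ v, f v = t := by
  rw [Set.mem_smul_set_iff_inv_smul_mem₀ ht.ne', hG.edgePolytope_eq_image_stdSimplex,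
    ← map_smul, h.vertexWeights_injective.mem_set_image]
  simp only [stdSimplex, Set.mem_ofPred_eq, Pi.smul_apply, smul_eq_mul, ← Finset.mul_sum,
    mul_nonneg_iff_of_pos_left (inv_pos.2 ht), inv_mul_eq_one₀ ht.ne', eq_comm]

theorem vertexWeights_mem_intrinsicInterior (hG : IsOrbitGraph G σ) (h : IsOddCyclePair σ A)
    {t : ℝ} {f : Fin N → ℝ} (hpos : ∀ v, 0 < f v) (hsum : ∑ v, f v = t) :
    vertexWeights ℝ σ f ∈ intrinsicInterior ℝ (t • edgePolytope G) := by
  have ht : 0 < t := by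
    have := h.nonempty
    exact hsum ▸ Finset.sum_pos (fun v _ => hpos v) Finset.univ_nonempty
  let T : (Fin N → ℝ) ≃ₗ[ℝ] (Fin N → ℝ) :=
    (LinearEquiv.ofInjectiveEndo _ h.vertexWeights_injective).trans
      (LinearEquiv.smulOfNeZero ℝ _ t ht.ne')
  have hT : ⇑T.toAffineEquiv = fun g => t • vertexWeights ℝ σ g := rfl
  have hP : t • edgePolytope G = T.toAffineEquiv '' stdSimplex ℝ (Fin N) := by
    rw [hG.edgePolytope_eq_image_stdSimplex, ← Set.image_smul, Set.image_image, hT]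
  rw [hP, AffineEquiv.intrinsicInterior_image]
  refine ⟨t⁻¹ • f, mem_intrinsicInterior_stdSimplex (fun v => ?_) ?_, ?_⟩
  · exact mul_pos (inv_pos.2 ht) (hpos v)
  · simp [← Finset.mul_sum, hsum, ht.ne']
  · simp only [hT, map_smul, smul_inv_smul₀ ht.ne']

theorem one_mem_intrinsicInterior_smul_edgePolytope (hG : IsOrbitGraph G σ)
    (h : IsOddCyclePair σ A) {m : ℕ} (hN : N = 2 * m) :
    (fun _ => (1 : ℝ)) ∈ intrinsicInterior ℝ ((m : ℝ) • edgePolytope G) := by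
  have hone : vertexWeights ℝ σ (fun _ => 1 / 2) = fun _ => 1 := by
    ext v
    norm_num
  rw [← hone]
  refine vertexWeights_mem_intrinsicInterior hG h (fun _ => one_half_pos) ?_
  simp [hN, mul_comm]

end Polytope

section LatticePoints

variable {V : Type*} {σ : Equiv.Perm V}

/-- The integral vertex weights coming from the edge weights `a v + ε / 2`, where `p = ⟨ε, a⟩`. -/
def latticePoint (σ : Equiv.Perm V) (p : Fin 2 × (V → ℕ)) (v : V) : ℤ :=
  vertexWeights ℕ σ p.2 v + (p.1 : ℕ)

theorem intCast_latticePoint (p : Fin 2 × (V → ℕ)) :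
    (fun v => (latticePoint σ p v : ℝ)) = vertexWeights ℝ σ fun v => p.2 v + p.1 / 2 := by
  ext v
  simp only [latticePoint, vertexWeights_apply]
  push_cast
  ring

theorem IsOddCyclePair.latticePoint_injective [Fintype V] [DecidableEq V] {A : Finset V}
    (h : IsOddCyclePair σ A) : Function.Injective (latticePoint σ) := by
  rintro ⟨ε, a⟩ ⟨ε', a'⟩ heq
  have hweight : (fun v => (2 * a v + ε : ℤ)) = fun v => (2 * a' v + ε' : ℤ) := by
    refine h.vertexWeights_injective (R := ℤ) (funext fun v => ?_)
    have := congrFun heq v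
    simp only [latticePoint, vertexWeights_apply] at this ⊢
    push_cast at this
    linarith
  have hv (v : V) : ε = ε' ∧ a v = a' v := by
    have := congrFun hweight v
    omega
  have := h.nonempty
  exact Prod.ext (hv (Classical.arbitrary V)).1 (funext fun v => (hv v).2)

theorem card_piAntidiag_univ {ι : Type*} [Fintype ι] [DecidableEq ι] (n : ℕ) :
    (Finset.piAntidiag (Finset.univ : Finset ι) n).card = (Fintype.card ι).multichoose n := by
  rw [← Finset.map_sym_eq_piAntidiag, Finset.card_map, Finset.sym_univ, Finset.card_univ,
    Sym.card_sym_eq_multichoose]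

theorem setOf_sum_add_eq_coe_piAntidiag {ι : Type*} [Fintype ι] [DecidableEq ι] (s t : ℕ) :
    {a : ι → ℕ | ∑ i, a i + s = t} =
      (if s ≤ t then Finset.piAntidiag Finset.univ (t - s) else ∅ : Finset (ι → ℕ)) := by
  ext a
  split_ifs with hst
  · simp [eq_tsub_iff_add_eq_of_le hst]
  · simp only [Set.mem_ofPred_eq, Finset.coe_empty, Set.mem_empty_iff_false, iff_false]
    omega

theorem card_setOf_sum_add_mul_eq {ι : Type*} [Fintype ι] (m t : ℕ) :
    Nat.card {p : Fin 2 × (ι → ℕ) | ∑ i, p.2 i + p.1 * m = t} =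
      (Fintype.card ι).multichoose t +
        if m ≤ t then (Fintype.card ι).multichoose (t - m) else 0 := by
  classical
  have hcoe (s : ℕ) := setOf_sum_add_eq_coe_piAntidiag (ι := ι) s t
  have (ε : Fin 2) : Finite {a : ι → ℕ // ∑ i, a i + ε * m = t} :=
    (hcoe (ε * m) ▸ Finset.finite_toSet _ : {a : ι → ℕ | ∑ i, a i + ε * m = t}.Finite)
  have hcard (s : ℕ) : Nat.card {a : ι → ℕ // ∑ i, a i + s = t} =
      if s ≤ t then (Fintype.card ι).multichoose (t - s) else 0 := by
    refine (congrArg Set.ncard (hcoe s)).trans ?_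
    rw [Set.ncard_coe_finset, apply_ite Finset.card, card_piAntidiag_univ, Finset.card_empty]
  calc Nat.card {p : Fin 2 × (ι → ℕ) // ∑ i, p.2 i + p.1 * m = t}
    _ = ∑ ε : Fin 2, Nat.card {a : ι → ℕ // ∑ i, a i + ε * m = t} := by
      rw [← Nat.card_sigma]
      exact Nat.card_congr (Equiv.subtypeProdEquivSigmaSubtype
        fun (ε : Fin 2) (a : ι → ℕ) => ∑ i, a i + ε * m = t)
    _ = _ := by simp [hcard]

end LatticePoints

section Ehrhart

variable {N m : ℕ} {G : SimpleGraph (Fin N)} {σ : Equiv.Perm (Fin N)} {A : Finset (Fin N)}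

theorem latticePoint_mem_smul_edgePolytope_iff (hG : IsOrbitGraph G σ) (h : IsOddCyclePair σ A)
    (hN : N = 2 * m) {t : ℕ} (ht : 0 < t) {p : Fin 2 × (Fin N → ℕ)} :
    (fun v => (latticePoint σ p v : ℝ)) ∈ (t : ℝ) • edgePolytope G ↔
      ∑ v, p.2 v + p.1 * m = t := by
  have hsum : ∑ v, ((p.2 v : ℝ) + p.1 / 2) = ((∑ v, p.2 v + p.1 * m : ℕ) : ℝ) := by
    subst hN
    push_cast
    simp only [Finset.sum_add_distrib, Finset.sum_const, Finset.card_univ, Fintype.card_fin,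
      nsmul_eq_mul, Nat.cast_mul, Nat.cast_ofNat]
    ring
  rw [intCast_latticePoint, vertexWeights_mem_smul_edgePolytope_iff hG h (Nat.cast_pos.2 ht), hsum,
    Nat.cast_inj]
  exact and_iff_right fun v => by positivity

theorem exists_latticePoint_eq (hG : IsOrbitGraph G σ) (h : IsOddCyclePair σ A) {t : ℕ}
    (ht : 0 < t) {x : Fin N → ℤ} (hx : (fun v => (x v : ℝ)) ∈ (t : ℝ) • edgePolytope G) :
    ∃ p, latticePoint σ p = x := by
  obtain ⟨f, hf⟩ := LinearMap.injective_iff_surjective.1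
    (h.vertexWeights_injective (R := ℝ)) fun v => (x v : ℝ)
  rw [← hf, vertexWeights_mem_smul_edgePolytope_iff hG h (Nat.cast_pos.2 ht)] at hx
  obtain ⟨hpos, hsum⟩ := hx
  obtain ⟨ε, z, hz⟩ := h.exists_forall_eq_intCast_add_half (f := f) (x := x ∘ σ) (t := t)
    (fun v => by simpa using congrFun hf (σ v)) (by simpa using hsum)
  have hz0 (v : Fin N) : 0 ≤ z v := by
    have h2 : (0 : ℝ) ≤ (2 * z v + ε : ℤ) := by
      have := hpos v
      rw [hz] at this
      push_cast
      linarith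
    have : 0 ≤ 2 * z v + ε := by exact_mod_cast h2
    omega
  lift z to Fin N → ℕ using hz0
  refine ⟨(ε, z), funext fun v => Int.cast_injective (α := ℝ) ?_⟩
  rw [congrFun (intCast_latticePoint _) v, ← congrFun hf v]
  exact congrArg (vertexWeights ℝ σ · v) (funext fun u => by simp [hz])

theorem setOf_mem_smul_edgePolytope_eq_image_latticePoint (hG : IsOrbitGraph G σ)
    (h : IsOddCyclePair σ A) (hN : N = 2 * m) {t : ℕ} (ht : 0 < t) :
    {x : Fin N → ℤ | (fun v => (x v : ℝ)) ∈ (t : ℝ) • edgePolytope G} =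
      latticePoint σ '' {p | ∑ v, p.2 v + p.1 * m = t} := by
  ext x
  constructor
  · intro hx
    obtain ⟨p, rfl⟩ := exists_latticePoint_eq hG h ht hx
    exact ⟨p, (latticePoint_mem_smul_edgePolytope_iff hG h hN ht).1 hx, rfl⟩
  · rintro ⟨p, hp, rfl⟩
    exact (latticePoint_mem_smul_edgePolytope_iff hG h hN ht).2 hp

theorem ehr_edgePolytope (hG : IsOrbitGraph G σ) (h : IsOddCyclePair σ A) (hN : N = 2 * m)
    (t : ℕ) :
    ehr (edgePolytope G) t = N.multichoose t + if m ≤ t then N.multichoose (t - m) else 0 := by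
  have hm : 0 < m := by have := h.pos; omega
  rcases t.eq_zero_or_pos with rfl | ht
  · simp [ehr, hm.ne']
  · rw [ehr, if_neg ht.ne']
    calc Nat.card {x : Fin N → ℤ | (fun v => (x v : ℝ)) ∈ (t : ℝ) • edgePolytope G}
      _ = Nat.card {p : Fin 2 × (Fin N → ℕ) | ∑ v, p.2 v + p.1 * m = t} := by
        rw [setOf_mem_smul_edgePolytope_eq_image_latticePoint hG h hN ht,
          Nat.card_image_of_injective h.latticePoint_injective]
      _ = _ := by rw [card_setOf_sum_add_mul_eq, Fintype.card_fin]

end Ehrhart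

section DeltaPolynomial

theorem coeff_one_sub_X_pow {R : Type*} [CommRing R] (n j : ℕ) :
    PowerSeries.coeff j ((1 - PowerSeries.X : PowerSeries R) ^ n) = (-1) ^ j * n.choose j := by
  have hrescale : (1 - PowerSeries.X : PowerSeries R) =
      PowerSeries.rescale (-1) (1 + PowerSeries.X) := by
    simp [sub_eq_add_neg]
  have hcoe : (1 + PowerSeries.X : PowerSeries R) ^ n =
      ((1 + Polynomial.X) ^ n : Polynomial R) := by
    simp
  rw [hrescale, ← map_pow, PowerSeries.coeff_rescale, hcoe, Polynomial.coeff_coe,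
    Polynomial.coeff_one_add_X_pow]

theorem deltaCoeff_eq_coeff {N : ℕ} (P : Set (Fin N → ℝ)) (i : ℕ) :
    deltaCoeff P i = PowerSeries.coeff i
      ((1 - PowerSeries.X) ^ (polyDim P + 1) * PowerSeries.mk fun t => (ehr P t : ℤ)) := by
  rw [PowerSeries.coeff_mul, Finset.Nat.sum_antidiagonal_eq_sum_range_succ_mk, deltaCoeff]
  simp [coeff_one_sub_X_pow]

theorem mk_multichoose_mul_one_sub_X_pow (R : Type*) [CommRing R] {n : ℕ} (hn : 0 < n) :
    (PowerSeries.mk fun t => (n.multichoose t : R)) * (1 - PowerSeries.X) ^ n = 1 := by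
  obtain ⟨d, rfl⟩ := Nat.exists_eq_add_one_of_ne_zero hn.ne'
  have hchoose (t : ℕ) : (d + 1).multichoose t = (d + t).choose d := by
    rw [Nat.multichoose_eq, Nat.add_right_comm, Nat.add_sub_cancel, Nat.choose_symm_add]
  simp only [hchoose, PowerSeries.mk_add_choose_mul_one_sub_pow_eq_one]

variable {N m : ℕ} {G : SimpleGraph (Fin N)} {σ : Equiv.Perm (Fin N)} {A : Finset (Fin N)}

theorem deltaCoeff_edgePolytope (hG : IsOrbitGraph G σ) (h : IsOddCyclePair σ A) (hN : N = 2 * m)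
    (i : ℕ) :
    deltaCoeff (edgePolytope G) i =
      PowerSeries.coeff i (1 + PowerSeries.X ^ m : PowerSeries ℤ) := by
  have hehr : (PowerSeries.mk fun t => (ehr (edgePolytope G) t : ℤ)) =
      (PowerSeries.mk fun t => (N.multichoose t : ℤ)) * (1 + PowerSeries.X ^ m) := by
    ext t
    simp only [ehr_edgePolytope hG h hN, mul_add, mul_one, map_add, PowerSeries.coeff_mul_X_pow',
      PowerSeries.coeff_mk, Nat.cast_add, Nat.cast_ite, Nat.cast_zero]
  rw [deltaCoeff_eq_coeff, polyDim_edgePolytope hG h, Nat.sub_add_cancel h.pos, hehr, ← mul_assoc,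
    mul_comm (_ ^ _), mk_multichoose_mul_one_sub_X_pow ℤ h.pos, one_mul]

theorem polyDeg_edgePolytope (hG : IsOrbitGraph G σ) (h : IsOddCyclePair σ A) (hN : N = 2 * m) :
    polyDeg (edgePolytope G) = m := by
  have hm : 0 < m := by have := h.pos; omega
  have hdelta (i : ℕ) : deltaCoeff (edgePolytope G) i =
      (if i = 0 then 1 else 0) + if i = m then 1 else 0 := by
    rw [deltaCoeff_edgePolytope hG h hN, map_add, PowerSeries.coeff_one, PowerSeries.coeff_X_pow]
  refine IsGreatest.csSup_eq ⟨?_, fun i hi => ?_⟩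
  · simp [hdelta, hm.ne']
  · by_contra! hlt
    refine hi ?_
    rw [hdelta, if_neg (by omega), if_neg hlt.ne', add_zero]

end DeltaPolynomial

/-- Let `G` be the vertex-disjoint union of a cycle of length `2k+1`
and a cycle of length `2ℓ+1` on `2k+2ℓ+2` vertices, and let `C ⊂ ℝ^{2k+2ℓ+2}` be the
convex hull of the vectors `ρ(e)`, `e ∈ E(G)`.  Then `dim C = 2k+2ℓ+1`, the all-ones
vector lies in the relative interior of `(k+ℓ+1)C`, so `codeg(C) ≤ k+ℓ+1` and hence
`deg(C) ≥ k+ℓ+1`. -/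
theorem disjoint_odd_cycles_polytope
    (k l : ℕ) (hk : 1 ≤ k) (hl : 1 ≤ l)
    (G : SimpleGraph (Fin (2 * k + 2 * l + 2)))
    {v w : Fin (2 * k + 2 * l + 2)} (c₁ : G.Walk v v) (c₂ : G.Walk w w)
    (hc₁ : c₁.IsCycle) (hc₂ : c₂.IsCycle)
    (hlen₁ : c₁.length = 2 * k + 1) (hlen₂ : c₂.length = 2 * l + 1)
    (hdisj : ∀ x, x ∈ c₁.support → x ∉ c₂.support)
    (hcover : ∀ x, x ∈ c₁.support ∨ x ∈ c₂.support)
    (hedge : G.edgeSet = {e | e ∈ c₁.edges} ∪ {e | e ∈ c₂.edges}) :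
    polyDim (edgePolytope G) = 2 * k + 2 * l + 1 ∧
    (fun _ => (1 : ℝ)) ∈
      intrinsicInterior ℝ (((k + l + 1 : ℕ) : ℝ) • edgePolytope G) ∧
    polyDim (edgePolytope G) + 1 - polyDeg (edgePolytope G) ≤ k + l + 1 ∧
    k + l + 1 ≤ polyDeg (edgePolytope G) := by
  obtain ⟨σ, A, h, hG⟩ :=
    exists_isOddCyclePair hc₁ hc₂ ⟨k, hlen₁⟩ ⟨l, hlen₂⟩ hdisj hcover hedge
  have hN : 2 * k + 2 * l + 2 = 2 * (k + l + 1) := by ring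
  have hdim := polyDim_edgePolytope hG h
  have hdeg := polyDeg_edgePolytope hG h hN
  exact ⟨hdim, one_mem_intrinsicInterior_smul_edgePolytope hG h hN, by omega, hdeg.ge⟩
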